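/- arXiv:2310.11468 — 4 statements merged into one kernel-verified Lean document; each statement's English description precedes it below -/
import Mathlib

section
/- For every real r > 0, define P₁(r) := (1/Γ(3/2)) · ∫₀^∞ e^{−u} · u^{1/2} · Re((1 + iu/(4r))^{1/2}) du, where the complex power uses the principal branch. Then |P₁(r) − 1 − 15/(512·r²)| ≤ 105/(8192·r³). -/
/-!
Put `x = u / (4r)` and `w = (1 + ix)^{1/2} = a + ib`. Taking real and imaginary parts of
`w² = 1 + ix` gives `a² - b² = 1` and `2ab = x`, and `a ≥ 0` since the branch is principal. Hence
`1 + x²/8 - a = (a - 1)² (a² + 2a + 2) / 2`, which is nonnegative, and comparing squares shows it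
to be at most `a³b³/2 = x³/16` (`taylor_bound_of_real_imag`). Thus
`|Re (1 + ix)^{1/2} - 1 - x²/8| ≤ x³/16` for all `x ≥ 0`.

Integrating this pointwise bound against `e^{-u} u^{1/2}`, whose moments of order `0`, `2`, `3` are
`1`, `15/4`, `105/8` times `Γ(3/2)`, yields the claim.
-/

open MeasureTheory Set

/-- The second-order Taylor bound for `Re (1 + ix)^{1/2}`, in terms of the real and imaginary parts
`a`, `b` of the square root. -/
lemma taylor_bound_of_real_imag (a b x : ℝ) (ha : 0 ≤ a) (hx : 0 ≤ x)
    (h1 : a ^ 2 - b ^ 2 = 1) (h2 : 2 * a * b = x) :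
    |a - 1 - x ^ 2 / 8| ≤ x ^ 3 / 16 := by
  have ha1 : 1 ≤ a := by nlinarith [sq_nonneg b]
  have hb : 0 ≤ b := by
    by_contra hneg
    nlinarith [not_le.mp hneg]
  have hb2 : b ^ 2 = (a - 1) * (a + 1) := by linarith
  have hx2 : x ^ 2 = 4 * a ^ 2 * ((a - 1) * (a + 1)) := by rw [← h2, ← hb2]; ring
  have key : (a - 1) ^ 2 * (a ^ 2 + 2 * a + 2) ≤ a ^ 3 * b ^ 3 := by
    apply le_of_sq_le_sq _ (by positivity)
    have e : (a ^ 3 * b ^ 3) ^ 2 = a ^ 6 * ((a - 1) * (a + 1)) ^ 3 := by rw [← hb2]; ring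
    rw [e]
    obtain ⟨t, rfl⟩ : ∃ t, a = 1 + t := ⟨a - 1, by ring⟩
    have ht : 0 ≤ t := by linarith
    rw [← sub_nonneg]
    -- After division by `t³`, the difference is a polynomial in `t` with nonnegative coefficients.
    have : (1 + t) ^ 6 * ((1 + t - 1) * (1 + t + 1)) ^ 3
        - ((1 + t - 1) ^ 2 * ((1 + t) ^ 2 + 2 * (1 + t) + 2)) ^ 2
        = t ^ 3 * (t ^ 9 + 12 * t ^ 8 + 63 * t ^ 7 + 190 * t ^ 6 + 362 * t ^ 5 + 448 * t ^ 4
          + 351 * t ^ 3 + 158 * t ^ 2 + 35 * t + 8) := by ring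
    rw [this]
    positivity
  have hx3 : x ^ 3 = 8 * (a ^ 3 * b ^ 3) := by rw [← h2]; ring
  rw [abs_le, hx3, hx2]
  constructor
  · nlinarith
  · have : 0 ≤ a ^ 3 * b ^ 3 := by positivity
    have : 0 ≤ (a - 1) ^ 2 * (a ^ 2 + 2 * a + 2) := by positivity
    nlinarith

lemma re_cpow_half_nonneg (z : ℂ) : 0 ≤ (z ^ ((1 : ℂ) / 2)).re := by
  rcases eq_or_ne z 0 with rfl | hz
  · simp
  rw [Complex.cpow_def_of_ne_zero hz, Complex.exp_re]
  have him : (Complex.log z * (1 / 2)).im = z.arg / 2 := by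
    rw [Complex.mul_im, Complex.log_im]; simp; ring
  rw [him]
  have h1 := Complex.neg_pi_lt_arg z
  have h2 := Complex.arg_le_pi z
  exact mul_nonneg (Real.exp_pos _).le
    (Real.cos_nonneg_of_neg_pi_div_two_le_of_le (by linarith) (by linarith))

lemma re_sqrt_bound (z : ℂ) (x : ℝ) (hx : 0 ≤ x) (hz : z = 1 + x * Complex.I) :
    |(z ^ ((1 : ℂ) / 2)).re - 1 - x ^ 2 / 8| ≤ x ^ 3 / 16 := by
  have hsq : (z ^ ((1 : ℂ) / 2)) ^ 2 = z := by
    simp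
  have hre := congrArg Complex.re hsq
  have him := congrArg Complex.im hsq
  have e1 : z.re = 1 := by simp [hz]
  have e2 : z.im = x := by simp [hz]
  rw [e1, pow_two, Complex.mul_re] at hre
  rw [e2, pow_two, Complex.mul_im] at him
  exact taylor_bound_of_real_imag _ (z ^ ((1 : ℂ) / 2)).im x (re_cpow_half_nonneg z) hx (by linarith) (by linarith)

lemma moment_integrable (n : ℕ) :
    IntegrableOn (fun u : ℝ => Real.exp (-u) * u ^ ((1 : ℝ) / 2) * u ^ n) (Ioi 0) := by
  have h := Real.GammaIntegral_convergent (s := 3 / 2 + n) (by positivity)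
  refine h.congr_fun (fun u hu => ?_) measurableSet_Ioi
  have hu' : (0 : ℝ) < u := hu
  simp only
  rw [mul_assoc, ← Real.rpow_natCast u n, ← Real.rpow_add hu']
  ring_nf

lemma moment_eq (n : ℕ) :
    ∫ u in Ioi (0 : ℝ), Real.exp (-u) * u ^ ((1 : ℝ) / 2) * u ^ n = Real.Gamma (3 / 2 + n) := by
  rw [Real.Gamma_eq_integral (by positivity)]
  refine setIntegral_congr_fun measurableSet_Ioi (fun u hu => ?_)
  have hu' : (0 : ℝ) < u := hu
  rw [mul_assoc, ← Real.rpow_natCast u n, ← Real.rpow_add hu']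
  ring_nf

/-- For every real `r > 0`, Watson's function
`P₁(r) = (1/Γ(3/2)) ∫₀^∞ e^{−u} u^{1/2} Re((1 + iu/(4r))^{1/2}) du` satisfies
`|P₁(r) − 1 − 15/(512 r²)| ≤ 105/(8192 r³)`. -/
theorem watson_P_one_bound (r : ℝ) (hr : 0 < r) :
    |(1 / Real.Gamma (3 / 2)) *
          (∫ u in Set.Ioi (0 : ℝ),
            Real.exp (-u) * u ^ ((1 : ℝ) / 2) *
              (((1 : ℂ) + (u : ℂ) * Complex.I / (4 * (r : ℂ))) ^ ((1 : ℂ) / 2)).re) -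
        1 - 15 / (512 * r ^ 2)| ≤
      105 / (8192 * r ^ 3) := by
  set f : ℝ → ℝ := fun u => Real.exp (-u) * u ^ ((1 : ℝ) / 2) *
    (((1 : ℂ) + (u : ℂ) * Complex.I / (4 * (r : ℂ))) ^ ((1 : ℂ) / 2)).re with hf
  set m : ℕ → ℝ → ℝ := fun n u => Real.exp (-u) * u ^ ((1 : ℝ) / 2) * u ^ n with hm
  set g : ℝ → ℝ := fun u => m 0 u + 1 / (128 * r ^ 2) * m 2 u with hg
  set h : ℝ → ℝ := fun u => 1 / (1024 * r ^ 3) * m 3 u with hh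
  have hG : 0 < Real.Gamma (3 / 2) := Real.Gamma_pos_of_pos (by norm_num)
  have G1 : Real.Gamma (3 / 2 + 1) = 3 / 2 * Real.Gamma (3 / 2) :=
    Real.Gamma_add_one (by norm_num)
  have G2 : Real.Gamma (3 / 2 + 2) = 15 / 4 * Real.Gamma (3 / 2) := by
    rw [show (3 / 2 + 2 : ℝ) = (3 / 2 + 1) + 1 by norm_num, Real.Gamma_add_one (by norm_num), G1]
    ring
  have G3 : Real.Gamma (3 / 2 + 3) = 105 / 8 * Real.Gamma (3 / 2) := by
    rw [show (3 / 2 + 3 : ℝ) = (3 / 2 + 2) + 1 by norm_num, Real.Gamma_add_one (by norm_num), G2]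
    ring
  have hmi : ∀ n, IntegrableOn (m n) (Ioi 0) := moment_integrable
  have hgi : IntegrableOn g (Ioi 0) := (hmi 0).add ((hmi 2).const_mul _)
  have hhi : IntegrableOn h (Ioi 0) := (hmi 3).const_mul _
  have hIg : ∫ u in Ioi 0, g u =
      Real.Gamma (3 / 2) * (1 + 15 / (512 * r ^ 2)) := by
    have e0 : ∫ u in Ioi 0, m 0 u = Real.Gamma (3 / 2) :=
      (moment_eq 0).trans (by simp)
    have e2 : ∫ u in Ioi 0, m 2 u = Real.Gamma (3 / 2 + 2) :=
      (moment_eq 2).trans (by norm_num)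
    rw [hg, integral_add (hmi 0) ((hmi 2).const_mul _), integral_const_mul, e0, e2, G2]
    field_simp
    ring
  have hIh : ∫ u in Ioi 0, h u = Real.Gamma (3 / 2) * (105 / (8192 * r ^ 3)) := by
    have e3 : ∫ u in Ioi 0, m 3 u = Real.Gamma (3 / 2 + 3) :=
      (moment_eq 3).trans (by norm_num)
    rw [hh, integral_const_mul, e3, G3]
    field_simp
    ring
  have hpt : ∀ u ∈ Ioi (0 : ℝ), ‖f u - g u‖ ≤ h u := by
    intro u hu
    have hu' : (0 : ℝ) < u := hu
    have hb := re_sqrt_bound (1 + (u : ℂ) * Complex.I / (4 * (r : ℂ))) (u / (4 * r))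
      (by positivity) (by push_cast; ring)
    have hw : 0 ≤ Real.exp (-u) * u ^ ((1 : ℝ) / 2) := by positivity
    have e : f u - g u = (Real.exp (-u) * u ^ ((1 : ℝ) / 2)) *
        ((((1 : ℂ) + (u : ℂ) * Complex.I / (4 * (r : ℂ))) ^ ((1 : ℂ) / 2)).re - 1
          - (u / (4 * r)) ^ 2 / 8) := by
      simp only [hf, hg, hm]
      field_simp
      ring
    have e' : h u = (Real.exp (-u) * u ^ ((1 : ℝ) / 2)) * ((u / (4 * r)) ^ 3 / 16) := by
      simp only [hh, hm]
      field_simp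
      ring
    rw [e, e', Real.norm_eq_abs, abs_mul, abs_of_nonneg hw]
    exact mul_le_mul_of_nonneg_left hb hw
  have hae : ∀ᵐ u ∂(volume.restrict (Ioi (0 : ℝ))), ‖f u - g u‖ ≤ h u :=
    (ae_restrict_iff' measurableSet_Ioi).2 (Filter.Eventually.of_forall hpt)
  have hfm : Measurable f := by
    simp only [hf]
    fun_prop
  have hd : IntegrableOn (fun u => f u - g u) (Ioi 0) :=
    hhi.mono' (hfm.aestronglyMeasurable.sub hgi.aestronglyMeasurable) hae
  have hfi : IntegrableOn f (Ioi 0) := by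
    refine (hd.add hgi).congr_fun (fun u _ => ?_) measurableSet_Ioi
    simp
  have hmain := norm_integral_le_of_norm_le hhi hae
  rw [integral_sub hfi hgi, hIg, hIh, Real.norm_eq_abs] at hmain
  have e : 1 / Real.Gamma (3 / 2) * (∫ u in Ioi 0, f u) - 1 - 15 / (512 * r ^ 2) =
      ((∫ u in Ioi 0, f u) - Real.Gamma (3 / 2) * (1 + 15 / (512 * r ^ 2)))
        / Real.Gamma (3 / 2) := by
    field_simp
    ring
  rw [e, abs_div, abs_of_pos hG, div_le_iff₀ hG]
  linarith
end

section
/- For every real r > 0, define Q₁(r) := (1/Γ(3/2)) · ∫₀^∞ e^{−u} · u^{1/2} · Im((1 + iu/(4r))^{1/2}) du, where the complex power uses the principal branch. Then |Q₁(r) − 3/(16·r)| ≤ 105/(8192·r³). -/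
/-!
Put `x = u/(4r) ≥ 0` and write `(1 + ix)^{1/2} = a + ib`. Then `a² - b² = 1` and `2ab = x` with
`a ≥ 1`, so `b = x/(2a)` and
`0 ≤ x/2 - b = (x/2)(1 - 1/a) ≤ (x/2)(a - 1) ≤ (x/2)(x²/8)`, the last step because
`x² = 4a²(a-1)(a+1)`. Thus `b` lies between `x/2 - x³/16` and `x/2` (`im_sqrt_bounds`).
Integrating against `e^{-u} u^{1/2}`, the term `x/2` contributes `Γ(5/2)/(8r)`, which gives
`3/(16r)` after division by `Γ(3/2)`, and the error is at most `Γ(9/2)/(1024 r³)`, which gives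
`105/(8192 r³)`.
-/

/-- The first-order Taylor bracket for `Im (1 + ix)^{1/2}`, valid for all `x ≥ 0`. -/
lemma im_sqrt_bounds (x : ℝ) (hx : 0 ≤ x) (z : ℂ) (hz : z = 1 + (x : ℂ) * Complex.I) :
    x / 2 - x ^ 3 / 16 ≤ (z ^ ((1 : ℂ) / 2)).im ∧ (z ^ ((1 : ℂ) / 2)).im ≤ x / 2 := by
  set w := z ^ ((1 : ℂ) / 2) with hw
  have hsq : w * w = z := by
    have h := Complex.cpow_nat_inv_pow z (n := 2) (by norm_num)
    rw [hw, one_div, ← sq]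
    exact_mod_cast h
  have hre : w.re * w.re - w.im * w.im = 1 := by
    have h := congrArg Complex.re hsq
    simpa [hz] using h
  have him : w.re * w.im + w.im * w.re = x := by
    have h := congrArg Complex.im hsq
    simpa [hz] using h
  -- The principal branch has `|arg| ≤ π/2`, hence a nonnegative real part.
  have hpos : 0 ≤ w.re := by
    have hz0 : z ≠ 0 := by
      intro h
      have h' := congrArg Complex.re h
      simp [hz] at h'
    rw [hw, Complex.cpow_def_of_ne_zero hz0, Complex.exp_re]
    refine mul_nonneg (Real.exp_pos _).le (Real.cos_nonneg_of_mem_Icc ?_)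
    have h1 : (Complex.log z * (1 / 2)).im = Complex.arg z / 2 := by
      rw [show (1 / 2 : ℂ) = ((1 / 2 : ℝ) : ℂ) by norm_num, Complex.im_mul_ofReal,
        Complex.log_im]
      ring
    rw [h1]
    constructor <;> linarith [Complex.neg_pi_lt_arg z, Complex.arg_le_pi z]
  generalize w.re = a at *
  generalize w.im = b at *
  have ha : 1 ≤ a := by nlinarith [mul_self_nonneg b]
  have hb : 0 ≤ b := by
    by_contra h
    push Not at h
    nlinarith
  have hx2 : x = 2 * a * b := by linarith
  subst hx2
  have hb2 : b * b = a * a - 1 := by linarith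
  constructor
  · have h3 : (2 * a * b) ^ 3 / 16 = b * (a ^ 3 * (a * a - 1) / 2) := by
      rw [← hb2]; ring
    have h1 : a - 1 ≤ a ^ 3 * (a * a - 1) / 2 := by
      have h4 : 1 ≤ a ^ 3 := one_le_pow₀ ha
      nlinarith [mul_nonneg (sub_nonneg.2 h4) (by nlinarith : 0 ≤ a * a - 1)]
    have h2 := mul_le_mul_of_nonneg_left h1 hb
    rw [h3]
    linarith
  · nlinarith

/-- For every real `r > 0`, Watson's function
`Q₁(r) = (1/Γ(3/2)) ∫₀^∞ e^{−u} u^{1/2} Im((1 + iu/(4r))^{1/2}) du` satisfies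
`|Q₁(r) − 3/(16 r)| ≤ 105/(8192 r³)`. -/
theorem watson_Q_one_bound (r : ℝ) (hr : 0 < r) :
    |(1 / Real.Gamma (3 / 2)) *
          (∫ u in Set.Ioi (0 : ℝ),
            Real.exp (-u) * u ^ ((1 : ℝ) / 2) *
              (((1 : ℂ) + (u : ℂ) * Complex.I / (4 * (r : ℂ))) ^ ((1 : ℂ) / 2)).im) -
        3 / (16 * r)| ≤
      105 / (8192 * r ^ 3) := by
  set f : ℝ → ℝ := fun u => Real.exp (-u) * u ^ ((1 : ℝ) / 2) *
    (((1 : ℂ) + (u : ℂ) * Complex.I / (4 * (r : ℂ))) ^ ((1 : ℂ) / 2)).im with hf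
  set g : ℝ → ℝ := fun u => Real.exp (-u) * u ^ ((5 / 2 : ℝ) - 1) * (1 / (8 * r)) with hg
  set h : ℝ → ℝ := fun u => Real.exp (-u) * u ^ ((9 / 2 : ℝ) - 1) * (1 / (1024 * r ^ 3)) with hh
  have hgi : MeasureTheory.IntegrableOn g (Set.Ioi 0) :=
    (Real.GammaIntegral_convergent (s := 5 / 2) (by norm_num)).mul_const _
  have hhi : MeasureTheory.IntegrableOn h (Set.Ioi 0) :=
    (Real.GammaIntegral_convergent (s := 9 / 2) (by norm_num)).mul_const _
  have hgI : ∫ u in Set.Ioi (0 : ℝ), g u = Real.Gamma (5 / 2) * (1 / (8 * r)) := by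
    rw [hg, MeasureTheory.integral_mul_const, Real.Gamma_eq_integral (by norm_num)]
  have hhI : ∫ u in Set.Ioi (0 : ℝ), h u = Real.Gamma (9 / 2) * (1 / (1024 * r ^ 3)) := by
    rw [hh, MeasureTheory.integral_mul_const, Real.Gamma_eq_integral (by norm_num)]
  have key : ∀ u ∈ Set.Ioi (0 : ℝ), g u - h u ≤ f u ∧ f u ≤ g u := by
    intro u hu
    have hu0 : (0 : ℝ) < u := hu
    obtain ⟨h1, h2⟩ := im_sqrt_bounds (u / (4 * r)) (by positivity)
      ((1 : ℂ) + (u : ℂ) * Complex.I / (4 * (r : ℂ))) (by push_cast; ring)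
    have hw : 0 ≤ Real.exp (-u) * u ^ ((1 : ℝ) / 2) := by positivity
    have e1 : g u = Real.exp (-u) * u ^ ((1 : ℝ) / 2) * (u / (4 * r) / 2) := by
      rw [hg]
      simp only
      rw [show (5 / 2 : ℝ) - 1 = 1 / 2 + 1 by norm_num, Real.rpow_add_one hu0.ne']
      field_simp
      norm_num
    have e2 : h u = Real.exp (-u) * u ^ ((1 : ℝ) / 2) * ((u / (4 * r)) ^ 3 / 16) := by
      rw [hh]
      simp only
      rw [show (9 / 2 : ℝ) - 1 = 1 / 2 + (3 : ℕ) by norm_num, Real.rpow_add_natCast hu0.ne']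
      field_simp
      norm_num
    rw [e1, e2, ← mul_sub]
    exact ⟨mul_le_mul_of_nonneg_left h1 hw, mul_le_mul_of_nonneg_left h2 hw⟩
  have hfm : Measurable f := by
    rw [hf]
    have : Measurable fun u : ℝ =>
        ((1 : ℂ) + (u : ℂ) * Complex.I / (4 * (r : ℂ))) ^ ((1 : ℂ) / 2) := by
      fun_prop
    have := Complex.measurable_im.comp this
    exact (by fun_prop : Measurable fun u : ℝ => Real.exp (-u) * u ^ ((1 : ℝ) / 2)).mul this
  have hfi : MeasureTheory.IntegrableOn f (Set.Ioi 0) := by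
    refine MeasureTheory.Integrable.mono' (hgi.norm.add hhi.norm) hfm.aestronglyMeasurable ?_
    filter_upwards [MeasureTheory.ae_restrict_mem measurableSet_Ioi] with u hu
    obtain ⟨h1, h2⟩ := key u hu
    simp only [Pi.add_apply, Real.norm_eq_abs]
    rw [abs_le]
    constructor <;>
      linarith [neg_abs_le (g u), le_abs_self (g u), le_abs_self (h u), abs_nonneg (h u)]
  have hlo : (∫ u in Set.Ioi (0 : ℝ), g u) - ∫ u in Set.Ioi (0 : ℝ), h u
      ≤ ∫ u in Set.Ioi (0 : ℝ), f u := by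
    rw [← MeasureTheory.integral_sub hgi hhi]
    exact MeasureTheory.setIntegral_mono_on (hgi.sub hhi) hfi measurableSet_Ioi
      fun u hu => (key u hu).1
  have hup : ∫ u in Set.Ioi (0 : ℝ), f u ≤ ∫ u in Set.Ioi (0 : ℝ), g u :=
    MeasureTheory.setIntegral_mono_on hfi hgi measurableSet_Ioi fun u hu => (key u hu).2
  have hG : 0 < Real.Gamma (3 / 2) := Real.Gamma_pos_of_pos (by norm_num)
  have G5 : Real.Gamma (5 / 2) = 3 / 2 * Real.Gamma (3 / 2) := by
    rw [← Real.Gamma_add_one (by norm_num)]; norm_num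
  have G7 : Real.Gamma (7 / 2) = 5 / 2 * Real.Gamma (5 / 2) := by
    rw [← Real.Gamma_add_one (by norm_num)]; norm_num
  have G9 : Real.Gamma (9 / 2) = 7 / 2 * Real.Gamma (7 / 2) := by
    rw [← Real.Gamma_add_one (by norm_num)]; norm_num
  rw [hgI, hhI, G9, G7, G5] at hlo
  rw [hgI, G5] at hup
  generalize (∫ u in Set.Ioi (0 : ℝ), f u) = I at *
  generalize Real.Gamma (3 / 2) = G at *
  have hGi : (0 : ℝ) ≤ 1 / G := by positivity
  have hlo' := mul_le_mul_of_nonneg_left hlo hGi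
  have hup' := mul_le_mul_of_nonneg_left hup hGi
  have e1 : 1 / G * (3 / 2 * G * (1 / (8 * r))) = 3 / (16 * r) := by
    field_simp
    norm_num
  have e2 : 1 / G * (7 / 2 * (5 / 2 * (3 / 2 * G)) * (1 / (1024 * r ^ 3)))
      = 105 / (8192 * r ^ 3) := by
    field_simp
    norm_num
  rw [mul_sub, e1, e2] at hlo'
  rw [e1] at hup'
  have hE : 0 ≤ 105 / (8192 * r ^ 3) := by positivity
  rw [abs_le]
  constructor <;> linarith
end

section
/- For every real r > 0, define P₀(r) := (1/√π) · ∫₀^∞ e^{−u} · u^{−1/2} · Re((1 + iu/(4r))^{−1/2}) du, where the complex power uses the principal branch. Then |P₀(r) − 1| ≤ 9/(512·r²). -/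
/-!
With `x = u / (4r)`, the integrand is controlled by the pointwise bound
`|Re((1 + ix)^{-1/2}) - 1| ≤ (3/8) x²` (`abs_re_cpow_sub_one_le`). Integrating it against
`e^{-u} u^{-1/2}` and using `Γ(1/2) = √π`, `Γ(5/2) = (3/4) √π` gives
`(3/8) · (1/16) · (3/4) / r² = 9 / (512 r²)`.

For the pointwise bound, write `(1 + ix)^{-1/2} = a + ib` and `s = a² + b² = (1 + x²)^{-1/2}`. Squaring
gives `a² - b² = s²`, hence `2a² = s + s²` and `s ≤ a ≤ 1`; the claim then reduces to
`4s²(2 + s) ≤ 3(1 + s)²` on `[0, 1]`, that is, to `(s - 1)(4s² + 9s + 3) ≤ 0`.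
-/

open MeasureTheory Set

/-- The real-variable core of the pointwise bound: `a = Re((1 + ix)^{-1/2})`,
`s = (1 + x²)^{-1/2}`, `y = x²`. -/
lemma abs_sub_one_le_of_sq_eq {a s y : ℝ} (ha : 0 ≤ a) (hs : 0 ≤ s) (hy : 0 ≤ y)
    (has : 2 * a ^ 2 = s + s ^ 2) (hsy : s ^ 2 * (1 + y) = 1) :
    |a - 1| ≤ 3 / 8 * y ∧ a ≤ 1 := by
  have hs0 : 0 < s := by
    rcases hs.eq_or_lt with h | h
    · rw [← h] at hsy; norm_num at hsy
    · exact h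
  have hs1 : s ≤ 1 := by nlinarith [mul_nonneg (sq_nonneg s) hy]
  have ha1 : a ≤ 1 := by nlinarith
  have hsa : s ≤ a := by
    apply (sq_le_sq₀ hs ha).1
    nlinarith
  refine ⟨?_, ha1⟩
  rw [abs_sub_comm, abs_of_nonneg (by linarith)]
  have hyv : y = (1 - s) * (1 + s) / s ^ 2 := by
    field_simp
    linarith
  have h1 : (1 - a) * (1 + a) = (1 - s) * (2 + s) / 2 := by linarith
  have key : 4 * s ^ 2 * (2 + s) ≤ 3 * (1 + s) * (1 + a) := by
    have h2 : 0 ≤ (1 - s) * (4 * s ^ 2 + 9 * s + 3) :=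
      mul_nonneg (by linarith) (by positivity)
    nlinarith [mul_nonneg (show 0 ≤ 1 + s by linarith) (sub_nonneg.2 hsa)]
  have h3 : 1 - a = (1 - s) * (2 + s) / (2 * (1 + a)) := by
    field_simp
    linarith
  rw [h3, hyv, ← mul_div_assoc, div_le_div_iff₀ (by positivity) (by positivity)]
  nlinarith [mul_le_mul_of_nonneg_left key (sub_nonneg.2 hs1)]

lemma abs_re_cpow_sub_one_le (x : ℝ) :
    |(((1 : ℂ) + x * Complex.I) ^ (-(1 : ℂ) / 2)).re - 1| ≤ 3 / 8 * x ^ 2 ∧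
      0 ≤ (((1 : ℂ) + x * Complex.I) ^ (-(1 : ℂ) / 2)).re ∧
      (((1 : ℂ) + x * Complex.I) ^ (-(1 : ℂ) / 2)).re ≤ 1 := by
  have hz : (1 : ℂ) + x * Complex.I ≠ 0 := by
    intro h
    simpa using congrArg Complex.re h
  set w := ((1 : ℂ) + x * Complex.I) ^ (-(1 : ℂ) / 2) with hw
  -- The argument of `w` is `-arg (1 + ix) / 2`, which lies in `[-π/2, π/2]`.
  have ha : 0 ≤ w.re := by
    rw [hw, Complex.cpow_def_of_ne_zero hz, Complex.exp_re]
    have him : (Complex.log (1 + x * Complex.I) * (-(1 : ℂ) / 2)).im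
        = -(Complex.arg (1 + x * Complex.I) / 2) := by
      rw [show (-(1 : ℂ) / 2) = ((-1 / 2 : ℝ) : ℂ) by push_cast; ring, Complex.im_mul_ofReal,
        Complex.log_im]
      ring
    rw [him, Real.cos_neg]
    refine mul_nonneg (Real.exp_pos _).le (Real.cos_nonneg_of_neg_pi_div_two_le_of_le ?_ ?_)
    · linarith [Complex.neg_pi_lt_arg (1 + x * Complex.I)]
    · linarith [Complex.arg_le_pi (1 + x * Complex.I)]
  have hsq : w * w * (1 + x * Complex.I) = 1 := by
    rw [hw, ← Complex.cpow_add _ _ hz, show (-(1 : ℂ) / 2 + -1 / 2) = -1 by norm_num,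
      Complex.cpow_neg_one, inv_mul_cancel₀ hz]
  have hre := congrArg Complex.re hsq
  have him := congrArg Complex.im hsq
  simp at hre him
  generalize w.re = a at *
  generalize w.im = b at *
  have e1 : (a ^ 2 - b ^ 2) * (1 + x ^ 2) = 1 := by linear_combination hre + x * him
  have e2 : 2 * a * b = -x * (a ^ 2 - b ^ 2) := by linear_combination him
  have e3 : (a ^ 2 + b ^ 2) ^ 2 = a ^ 2 - b ^ 2 := by
    linear_combination (2 * a * b - x * (a ^ 2 - b ^ 2)) * e2 + (a ^ 2 - b ^ 2) * e1
  have := abs_sub_one_le_of_sq_eq (s := a ^ 2 + b ^ 2) ha (by positivity) (sq_nonneg x)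
    (by linarith) (by rw [e3]; exact e1)
  exact ⟨this.1, ha, this.2⟩

/-- For every real `r > 0`, Watson's function
`P₀(r) = (1/√π) ∫₀^∞ e^{−u} u^{−1/2} Re((1 + iu/(4r))^{−1/2}) du` satisfies
`|P₀(r) − 1| ≤ 9/(512 r²)`. -/
theorem watson_P_zero_bound (r : ℝ) (hr : 0 < r) :
    |(1 / Real.sqrt Real.pi) *
          (∫ u in Set.Ioi (0 : ℝ),
            Real.exp (-u) * u ^ (-(1 : ℝ) / 2) *
              (((1 : ℂ) + (u : ℂ) * Complex.I / (4 * (r : ℂ))) ^ (-(1 : ℂ) / 2)).re) -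
        1| ≤
      9 / (512 * r ^ 2) := by
  set g : ℝ → ℝ := fun u =>
    (((1 : ℂ) + (u : ℂ) * Complex.I / (4 * (r : ℂ))) ^ (-(1 : ℂ) / 2)).re with hg
  have hgb : ∀ u, |g u - 1| ≤ 3 / 8 * (u / (4 * r)) ^ 2 ∧ 0 ≤ g u ∧ g u ≤ 1 := by
    intro u
    have h := abs_re_cpow_sub_one_le (u / (4 * r))
    have e : (1 : ℂ) + ((u / (4 * r) : ℝ) : ℂ) * Complex.I
        = 1 + (u : ℂ) * Complex.I / (4 * (r : ℂ)) := by
      push_cast; ring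
    rw [e] at h
    exact h
  have hgm : Measurable g := by
    rw [hg]
    fun_prop
  have hΓ1 := Real.Gamma_one_half_eq
  have hΓ5 : Real.Gamma (5 / 2) = 3 / 4 * √Real.pi := by
    rw [show (5 / 2 : ℝ) = 1 / 2 + 1 + 1 by norm_num, Real.Gamma_add_one (by norm_num),
      Real.Gamma_add_one (by norm_num), hΓ1]
    ring
  have hi1 : IntegrableOn (fun u : ℝ => Real.exp (-u) * u ^ (-(1 : ℝ) / 2)) (Ioi 0) := by
    have := Real.GammaIntegral_convergent (s := 1 / 2) (by norm_num)
    norm_num at this ⊢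
    exact this
  have hi5 : IntegrableOn (fun u : ℝ => Real.exp (-u) * u ^ (3 / 2 : ℝ)) (Ioi 0) := by
    have := Real.GammaIntegral_convergent (s := 5 / 2) (by norm_num)
    norm_num at this ⊢
    exact this
  have hv1 : ∫ u in Ioi (0 : ℝ), Real.exp (-u) * u ^ (-(1 : ℝ) / 2) = √Real.pi := by
    rw [← hΓ1, Real.Gamma_eq_integral (by norm_num)]
    norm_num
  have hv5 : ∫ u in Ioi (0 : ℝ), Real.exp (-u) * u ^ (3 / 2 : ℝ) = 3 / 4 * √Real.pi := by
    rw [← hΓ5, Real.Gamma_eq_integral (by norm_num)]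
    norm_num
  have hig : IntegrableOn (fun u : ℝ => Real.exp (-u) * u ^ (-(1 : ℝ) / 2) * g u) (Ioi 0) := by
    refine Integrable.mul_bdd (c := 1) hi1 hgm.aestronglyMeasurable (.of_forall fun u => ?_)
    rw [Real.norm_eq_abs, abs_of_nonneg (hgb u).2.1]
    exact (hgb u).2.2
  have hπ : 0 < √Real.pi := Real.sqrt_pos.2 Real.pi_pos
  have hmain : |(∫ u in Ioi (0 : ℝ), Real.exp (-u) * u ^ (-(1 : ℝ) / 2) * g u) - √Real.pi|
      ≤ 3 / (128 * r ^ 2) * (3 / 4 * √Real.pi) := by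
    rw [← hv5, ← integral_const_mul]
    nth_rewrite 1 [← hv1]
    rw [← integral_sub hig hi1, ← Real.norm_eq_abs]
    refine norm_integral_le_of_norm_le (hi5.const_mul _) ?_
    filter_upwards [ae_restrict_mem measurableSet_Ioi] with u hu
    have hu : 0 < u := hu
    have hp : u ^ (3 / 2 : ℝ) = u ^ (-(1 : ℝ) / 2) * u ^ 2 := by
      rw [← Real.rpow_natCast, ← Real.rpow_add hu]
      norm_num
    have hk : 0 ≤ Real.exp (-u) * u ^ (-(1 : ℝ) / 2) := by positivity
    rw [← mul_sub_one, Real.norm_eq_abs, abs_mul, abs_of_nonneg hk, hp]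
    refine (mul_le_mul_of_nonneg_left (hgb u).1 hk).trans_eq ?_
    field_simp
    ring
  have e : ∀ I : ℝ, 1 / √Real.pi * I - 1 = (I - √Real.pi) / √Real.pi := by
    intro I
    field_simp
  rw [e, abs_div, abs_of_pos hπ, div_le_iff₀ hπ]
  refine hmain.trans_eq ?_
  field_simp
  norm_num
end

section
/- For every real r > 0, define Q₀(r) := (1/√π) · ∫₀^∞ e^{−u} · u^{−1/2} · Im((1 + iu/(4r))^{−1/2}) du, where the complex power uses the principal branch. Then |Q₀(r) + 1/(16·r)| ≤ 9/(512·r²). -/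
/-!
Write `t = u / (4r)` and `w = (1 + it)^(-1/2) = a + ib`. From `w² (1 + it) = 1` and `a > 0` one gets
the elementary Taylor estimates `-t/2 ≤ b ≤ -t/2 + 3t²/8` for `t ≥ 0` (`im_bounds_of_eqs`).
Integrating them against `e^{-u} u^{-1/2}` leaves `Γ(3/2) = √π/2` in the main term and
`Γ(5/2) = 3√π/4` in the error term, which produce exactly `1/(16r)` and `9/(512r²)`.
-/

/-- The hypotheses are the real and imaginary parts of `(a + ib)² (1 + it) = 1`. -/
lemma im_bounds_of_eqs (a b t : ℝ) (ht : 0 ≤ t) (ha : 0 < a)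
    (h1 : a ^ 2 - b ^ 2 - 2 * a * b * t = 1)
    (h2 : 2 * a * b + (a ^ 2 - b ^ 2) * t = 0) :
    -(t / 2) ≤ b ∧ b ≤ -(t / 2) + 3 / 8 * t ^ 2 := by
  have e1 : (a ^ 2 - b ^ 2) * (1 + t ^ 2) = 1 := by linear_combination h1 + t * h2
  have e2 : 2 * a * b * (1 + t ^ 2) = -t := by linear_combination h2 - t * h1
  have e3 : (a ^ 2 + b ^ 2) ^ 2 * (1 + t ^ 2) = 1 := by
    linear_combination (a ^ 2 - b ^ 2) * e1 + 2 * a * b * e2 + h1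
  have hk : 1 ≤ a * (1 + t ^ 2) := by
    have hp : 0 < a * (1 + t ^ 2) := by positivity
    have hs : 1 ≤ (a * (1 + t ^ 2)) ^ 2 := by
      have : (a * (1 + t ^ 2)) ^ 2 = (1 + t ^ 2) * (1 + b ^ 2 * (1 + t ^ 2)) := by
        linear_combination (1 + t ^ 2) * e1
      rw [this]
      nlinarith [sq_nonneg t, mul_nonneg (sq_nonneg b) (by positivity : 0 ≤ 1 + t ^ 2),
        mul_nonneg (sq_nonneg t) (mul_nonneg (sq_nonneg b) (by positivity : 0 ≤ 1 + t ^ 2))]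
    nlinarith
  have ha1 : a ≤ 1 := by
    have h : (a ^ 2 + b ^ 2) ^ 2 ≤ 1 := by
      nlinarith [mul_nonneg (sq_nonneg (a ^ 2 + b ^ 2)) (sq_nonneg t)]
    have h' : a ^ 2 + b ^ 2 ≤ 1 := by nlinarith [sq_nonneg a, sq_nonneg b]
    nlinarith [sq_nonneg b]
  have hb : b ≤ 0 := by
    by_contra hb
    push Not at hb
    have : 0 < 2 * a * b * (1 + t ^ 2) := by positivity
    linarith
  constructor
  · nlinarith [mul_nonneg (sub_nonneg.2 hk) (neg_nonneg.2 hb)]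
  · have hq : 0 < 1 + t ^ 2 := by positivity
    have hc : t / 2 ≤ -b * (1 + t ^ 2) := by
      nlinarith [mul_nonneg (mul_nonneg (sub_nonneg.2 ha1) (neg_nonneg.2 hb)) hq.le]
    -- `(1 - 3t/4)(1 + t²) ≤ 1`, since `3t² - 4t + 3 > 0`
    have hpoly : (t / 2 - 3 / 8 * t ^ 2) * (1 + t ^ 2) ≤ t / 2 := by
      have : 0 ≤ t ^ 2 * (3 * t ^ 2 - 4 * t + 3) :=
        mul_nonneg (sq_nonneg t) (by nlinarith [sq_nonneg (3 * t - 2)])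
      nlinarith
    have := le_of_mul_le_mul_right (hpoly.trans hc) hq
    linarith

lemma im_cpow_bounds (t : ℝ) (ht : 0 ≤ t) :
    -(t / 2) ≤ (((1 : ℂ) + t * Complex.I) ^ (-(1 : ℂ) / 2)).im ∧
      (((1 : ℂ) + t * Complex.I) ^ (-(1 : ℂ) / 2)).im ≤ -(t / 2) + 3 / 8 * t ^ 2 := by
  have hz : (1 : ℂ) + t * Complex.I ≠ 0 := by
    intro h
    simpa using congrArg Complex.re h
  set w := ((1 : ℂ) + t * Complex.I) ^ (-(1 : ℂ) / 2) with hw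
  have hmul : w ^ 2 * (1 + t * Complex.I) = 1 := by
    have : w ^ 2 = ((1 : ℂ) + t * Complex.I)⁻¹ := by
      rw [hw, ← Complex.cpow_mul_nat, ← Complex.cpow_neg_one]
      norm_num
    rw [this, inv_mul_cancel₀ hz]
  have hre : 0 < w.re := by
    rw [hw, Complex.cpow_def_of_ne_zero hz, Complex.exp_re]
    refine mul_pos (Real.exp_pos _) (Real.cos_pos_of_mem_Ioo ?_)
    have him : (Complex.log (1 + t * Complex.I) * (-(1 : ℂ) / 2)).im
        = -(Complex.arg (1 + t * Complex.I) / 2) := by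
      have : (-(1 : ℂ) / 2) = ((-1 / 2 : ℝ) : ℂ) := by push_cast; ring
      rw [this, Complex.im_mul_ofReal, Complex.log_im]
      ring
    have hlt : Complex.arg (1 + t * Complex.I) < Real.pi / 2 :=
      (abs_lt.1 (Complex.abs_arg_lt_pi_div_two_iff.2 (Or.inl (by simp)))).2
    have hgt := Complex.neg_pi_lt_arg (1 + t * Complex.I)
    rw [him]
    constructor <;> linarith [Real.pi_pos]
  have hR := congrArg Complex.re hmul
  have hI := congrArg Complex.im hmul
  simp [pow_two] at hR hI
  exact im_bounds_of_eqs w.re w.im t ht hre (by linear_combination hR)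
    (by linear_combination hI)

/-- For every real `r > 0`, Watson's function
`Q₀(r) = (1/√π) ∫₀^∞ e^{−u} u^{−1/2} Im((1 + iu/(4r))^{−1/2}) du` satisfies
`|Q₀(r) + 1/(16 r)| ≤ 9/(512 r²)`. -/
theorem watson_Q_zero_bound (r : ℝ) (hr : 0 < r) :
    |(1 / Real.sqrt Real.pi) *
          (∫ u in Set.Ioi (0 : ℝ),
            Real.exp (-u) * u ^ (-(1 : ℝ) / 2) *
              (((1 : ℂ) + (u : ℂ) * Complex.I / (4 * (r : ℂ))) ^ (-(1 : ℂ) / 2)).im) +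
        1 / (16 * r)| ≤
      9 / (512 * r ^ 2) := by
  have hG32 : Real.Gamma (3 / 2) = Real.sqrt Real.pi / 2 := by
    rw [show (3 / 2 : ℝ) = 1 / 2 + 1 by norm_num, Real.Gamma_add_one (by norm_num),
      Real.Gamma_one_half_eq]
    ring
  have hG52 : Real.Gamma (5 / 2) = 3 * Real.sqrt Real.pi / 4 := by
    rw [show (5 / 2 : ℝ) = 3 / 2 + 1 by norm_num, Real.Gamma_add_one (by norm_num), hG32]
    ring
  set F : ℝ → ℝ := fun u => Real.exp (-u) * u ^ (-(1 : ℝ) / 2) *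
    (((1 : ℂ) + (u : ℂ) * Complex.I / (4 * (r : ℂ))) ^ (-(1 : ℂ) / 2)).im with hF
  set G : ℝ → ℝ := fun u => 1 / (8 * r) * (Real.exp (-u) * u ^ ((3 / 2 : ℝ) - 1)) with hG
  set H : ℝ → ℝ := fun u => 3 / (128 * r ^ 2) * (Real.exp (-u) * u ^ ((5 / 2 : ℝ) - 1)) with hH
  have iG : MeasureTheory.IntegrableOn G (Set.Ioi 0) :=
    (Real.GammaIntegral_convergent (by norm_num)).const_mul _
  have iH : MeasureTheory.IntegrableOn H (Set.Ioi 0) :=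
    (Real.GammaIntegral_convergent (by norm_num)).const_mul _
  have vG : ∫ u in Set.Ioi (0 : ℝ), G u = 1 / (8 * r) * (Real.sqrt Real.pi / 2) := by
    rw [hG, MeasureTheory.integral_const_mul, ← Real.Gamma_eq_integral (by norm_num), hG32]
  have vH : ∫ u in Set.Ioi (0 : ℝ), H u = 3 / (128 * r ^ 2) * (3 * Real.sqrt Real.pi / 4) := by
    rw [hH, MeasureTheory.integral_const_mul, ← Real.Gamma_eq_integral (by norm_num), hG52]
  have key : ∀ u ∈ Set.Ioi (0 : ℝ), 0 ≤ F u + G u ∧ F u + G u ≤ H u := by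
    intro u hu
    have hu : 0 < u := hu
    obtain ⟨h1, h2⟩ := im_cpow_bounds (u / (4 * r)) (by positivity)
    have harg : (1 : ℂ) + (u : ℂ) * Complex.I / (4 * (r : ℂ))
        = 1 + ((u / (4 * r) : ℝ) : ℂ) * Complex.I := by
      push_cast
      ring
    have p1 : u ^ ((3 / 2 : ℝ) - 1) = u ^ (-(1 : ℝ) / 2) * u := by
      rw [show (3 / 2 : ℝ) - 1 = -(1 : ℝ) / 2 + 1 by norm_num, Real.rpow_add_one hu.ne']
    have p2 : u ^ ((5 / 2 : ℝ) - 1) = u ^ (-(1 : ℝ) / 2) * u ^ 2 := by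
      rw [show (5 / 2 : ℝ) - 1 = -(1 : ℝ) / 2 + (2 : ℕ) by norm_num,
        Real.rpow_add_natCast hu.ne']
    simp only [hF, hG, hH]
    rw [harg, p1, p2]
    generalize (((1 : ℂ) + ((u / (4 * r) : ℝ) : ℂ) * Complex.I) ^ (-(1 : ℂ) / 2)).im = b at h1 h2 ⊢
    have hE : 0 ≤ Real.exp (-u) * u ^ (-(1 : ℝ) / 2) := by positivity
    generalize u ^ (-(1 : ℝ) / 2) = p at hE ⊢
    have e1 : Real.exp (-u) * p * b + 1 / (8 * r) * (Real.exp (-u) * (p * u))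
        = Real.exp (-u) * p * (b + u / (4 * r) / 2) := by
      field_simp
      ring
    have e2 : 3 / (128 * r ^ 2) * (Real.exp (-u) * (p * u ^ 2))
        = Real.exp (-u) * p * (3 / 8 * (u / (4 * r)) ^ 2) := by
      field_simp
      ring
    rw [e1, e2]
    exact ⟨mul_nonneg hE (by linarith), mul_le_mul_of_nonneg_left (by linarith) hE⟩
  have iFG : MeasureTheory.IntegrableOn (fun u => F u + G u) (Set.Ioi 0) := by
    refine iH.mono' ?_ ?_
    · apply Measurable.aestronglyMeasurable
      rw [hF, hG]
      fun_prop
    · filter_upwards [MeasureTheory.ae_restrict_mem measurableSet_Ioi] with u hu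
      rw [Real.norm_eq_abs, abs_of_nonneg (key u hu).1]
      exact (key u hu).2
  have iF : MeasureTheory.IntegrableOn F (Set.Ioi 0) := by
    have h := MeasureTheory.Integrable.sub iFG iG
    rwa [show (fun u => F u + G u) - G = F from add_sub_cancel_right F G] at h
  have hlow : 0 ≤ ∫ u in Set.Ioi (0 : ℝ), (F u + G u) :=
    MeasureTheory.setIntegral_nonneg measurableSet_Ioi fun u hu => (key u hu).1
  have hup : ∫ u in Set.Ioi (0 : ℝ), (F u + G u) ≤ ∫ u in Set.Ioi (0 : ℝ), H u :=
    MeasureTheory.setIntegral_mono_on iFG iH measurableSet_Ioi fun u hu => (key u hu).2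
  rw [MeasureTheory.integral_add iF iG, vG] at hlow hup
  rw [vH] at hup
  have hs : 0 < Real.sqrt Real.pi := Real.sqrt_pos.2 Real.pi_pos
  generalize (∫ u in Set.Ioi (0 : ℝ), F u) = I at hlow hup ⊢
  generalize Real.sqrt Real.pi = s at hlow hup hs ⊢
  have e1 : 1 / s * I + 1 / (16 * r) = 1 / s * (I + 1 / (8 * r) * (s / 2)) := by
    field_simp
    ring
  have e2 : 9 / (512 * r ^ 2) = 1 / s * (3 / (128 * r ^ 2) * (3 * s / 4)) := by
    field_simp
    ring
  rw [e1, e2, abs_of_nonneg (mul_nonneg (by positivity) hlow)]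
  exact mul_le_mul_of_nonneg_left hup (by positivity)
end
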